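/- Agregativity of the involution (Proposition 3.2): let K be a field and let b, h, c, g, d, f, k, l be pairwise distinct elements of K. Suppose that the three couples (b,h), (c,g), (d,f) form an algebraic involution and that the three couples (b,h), (c,g), (k,l) also form an algebraic involution. Then the three couples (c,g), (d,f), (k,l) form an algebraic involution. -/

import Mathlib

/-! Encode a couple `{x, x'}` by the point `(x + x', x * x')` of the affine plane. Each of the three
product identities defining an involution factors as (difference within one couple) times the
determinant `involutionDet`, which vanishes exactly when the three encoded points are collinear. So
three couples of distinct elements are in involution iff their points are collinear
(`isAlgInvolution_of_det`, `det_of_isAlgInvolution`). Since `b ∉ {c, g}`, the points of `(b, h)` and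
`(c, g)` are different, so they span a single line; the points of `(d, f)` and `(k, l)` both lie on
it, hence so do those of `(c, g)`, `(d, f)`, `(k, l)`. -/

/-- Six elements grouped in three couples (x,x'), (y,y'), (z,z') form an algebraic
involution. -/
def IsAlgInvolution {K : Type*} [Field K] (x x' y y' z z' : K) : Prop :=
  (z - y') * (z' - y') * (x - y) * (x' - y) = (x - y') * (x' - y') * (z - y) * (z' - y) ∧
  (y - z') * (y' - z') * (x - z) * (x' - z) = (x - z') * (x' - z') * (y - z) * (y' - z) ∧
  (y - x') * (y' - x') * (z - x) * (z' - x) = (z - x') * (z' - x') * (y - x) * (y' - x)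

/-- Minus the `3 × 3` determinant with rows `(1, x + x', x * x')`, `(1, y + y', y * y')`,
`(1, z + z', z * z')`, expanded after subtracting the second row from the others. -/
def involutionDet {K : Type*} [Field K] (x x' y y' z z' : K) : K :=
  (x + x' - (y + y')) * (z * z' - y * y') - (x * x' - y * y') * (z + z' - (y + y'))

theorem isAlgInvolution_of_det {K : Type*} [Field K] {x x' y y' z z' : K}
    (h : involutionDet x x' y y' z z' = 0) : IsAlgInvolution x x' y y' z z' := by
  unfold involutionDet at h
  refine ⟨?_, ?_, ?_⟩
  · linear_combination (y' - y) * h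
  · linear_combination (z - z') * h
  · linear_combination (x' - x) * h

theorem det_of_isAlgInvolution {K : Type*} [Field K] {x x' y y' z z' : K} (hy : y ≠ y')
    (h : IsAlgInvolution x x' y y' z z') : involutionDet x x' y y' z z' = 0 := by
  have key : (y' - y) * involutionDet x x' y y' z z' = 0 := by
    unfold involutionDet
    linear_combination h.1
  exact (mul_eq_zero.mp key).resolve_left (sub_ne_zero.mpr hy.symm)

/-- Agregativity of the involution (Proposition 3.2). -/
theorem involution_agregative {K : Type*} [Field K] (b h c g d f k l : K)
    (hdist : List.Pairwise (· ≠ ·) [b, h, c, g, d, f, k, l])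
    (h1 : IsAlgInvolution b h c g d f)
    (h2 : IsAlgInvolution b h c g k l) :
    IsAlgInvolution c g d f k l := by
  have hne : b ≠ c ∧ b ≠ g ∧ c ≠ g := by
    simp only [List.pairwise_cons, List.mem_cons] at hdist
    grind
  obtain ⟨hbc, hbg, hcg⟩ := hne
  have e1 := det_of_isAlgInvolution hcg h1
  have e2 := det_of_isAlgInvolution hcg h2
  apply isAlgInvolution_of_det
  -- With `u`, `v` the coordinate differences of the points of `(b, h)` and `(c, g)`, both `u * det`
  -- and `v * det` vanish, while `(b - c) * (b - g) = u * b - v` is nonzero.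
  have key : ((b - c) * (b - g)) * involutionDet c g d f k l = 0 := by
    unfold involutionDet at *
    linear_combination (b * (k + l - (c + g)) - (k * l - c * g)) * e1
      - (b * (d + f - (c + g)) - (d * f - c * g)) * e2
  exact (mul_eq_zero.mp key).resolve_left
    (mul_ne_zero (sub_ne_zero.mpr hbc) (sub_ne_zero.mpr hbg))
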